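/- Let (K,Φ) be a compact Hausdorff uniform space, 𝕏 a σ-finite measure space, and ℳ a Banach L^0(𝕏)-module. Then the unique linear continuous operator 𝔧 : UC_ord(K;L^0(𝕏)) ⊗̂_ε ℳ → UC_ord(K;ℳ) satisfying 𝔧(f ⊗ v)(p) = f(p)·v for every f ∈ UC_ord(K;L^0(𝕏)), v ∈ ℳ and p ∈ K, is an isomorphism of Banach L^0(𝕏)-modules. -/

import Mathlib

/-!
The operator `𝔧` is first built on the algebraic tensor product (`exists_tensor_map`), where it
sends `∑ f_i ⊗ v_i` to `p ↦ ∑ f_i(p) • v_i`.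

It is isometric for the injective norm (`isLUB_epsReps`).  For `ω`, `η` in the dual unit discs,
`∑ ω(f_i) η(v_i) = ω(∑ η(v_i) • f_i)` has absolute value at most
`⋁_p |η(∑ f_i(p) • v_i)| ≤ ⋁_p |∑ f_i(p) • v_i|`.  Conversely, the evaluation at `p` lies in the
dual unit disc, and the Hahn–Banach theorem for Banach `L⁰`-modules (`exists_dual_eq_pn`) yields
some `η` attaining `|∑ f_i(p) • v_i|`.  Hahn–Banach is the usual argument by the Zorn lemma, with
Dedekind completeness of `L⁰` (`exists_isLUB_of_bdd`) in the role of completeness of `ℝ`.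

Its range is dense (`tensor_map_dense`).  The variations of `w` over the entourages form a downward
directed family with infimum `0`, and directed infima in `L⁰` are approximated in the distance of
`L⁰` by members of the family (`exists_isGLB_of_directed`), so some entourage has variation of small
size.  A continuous partition of unity subordinate to a finite cover by sets small for that
entourage approximates `w` by `∑ φ_i ⊗ w(x_i)` (`exists_partition_approx`).

Completeness then extends `𝔧` to an isometric bijection (`exists_isometric_extension`), and
uniqueness follows from density and continuity.  If `K` is empty, the supremum of the empty family
exists in `L⁰` only when `L⁰` is trivial, and then all modules involved are zero.
-/

open MeasureTheory Filter Set TensorProduct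

noncomputable section

namespace Paper

variable {X : Type*} [MeasurableSpace X]

/-- The space `L⁰(𝕏)` of real-valued measurable functions up to `μ`-a.e. equality. -/
abbrev L0 (μ : Measure X) : Type _ := X →ₘ[μ] ℝ

instance (μ : Measure X) : CommRing (L0 μ) :=
  { (inferInstance : AddCommGroup (L0 μ)), (inferInstance : CommMonoid (L0 μ)) with
    left_distrib := fun a b c => AEEqFun.toGerm_injective <| by
      simp only [AEEqFun.mul_toGerm, AEEqFun.add_toGerm, mul_add]
    right_distrib := fun a b c => AEEqFun.toGerm_injective <| by
      simp only [AEEqFun.mul_toGerm, AEEqFun.add_toGerm, add_mul]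
    zero_mul := fun a => AEEqFun.toGerm_injective <| by
      simp only [AEEqFun.mul_toGerm, AEEqFun.zero_toGerm, zero_mul]
    mul_zero := fun a => AEEqFun.toGerm_injective <| by
      simp only [AEEqFun.mul_toGerm, AEEqFun.zero_toGerm, mul_zero] }

/-- The distance on `L⁰(𝕏)` inducing the topology of convergence in measure, defined through
the auxiliary finite measure `μ.toFinite` (which satisfies `μ ≪ μ.toFinite ≪ μ`). -/
noncomputable def dL0 (μ : Measure X) [SFinite μ] (f g : L0 μ) : ℝ :=
  ∫ x, min |f x - g x| 1 ∂(μ.toFinite)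

/-- A Banach `L⁰(𝕏)`-module: a module over `L⁰(𝕏)` endowed with a pointwise norm, complete
with respect to the induced distance. -/
class BanachMod (μ : Measure X) [SFinite μ] (M : Type*) [AddCommGroup M]
    [Module (L0 μ) M] where
  pn : M → L0 μ
  pn_nonneg : ∀ v : M, 0 ≤ pn v
  pn_eq_zero : ∀ v : M, pn v = 0 ↔ v = 0
  pn_add_le : ∀ v w : M, pn (v + w) ≤ pn v + pn w
  pn_smul : ∀ (f : L0 μ) (v : M), pn (f • v) = |f| * pn v
  complete : ∀ u : ℕ → M,
    (∀ ε : ℝ, 0 < ε → ∃ N : ℕ, ∀ m ≥ N, ∀ n ≥ N, dL0 μ (pn (u m - u n)) 0 < ε) →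
    ∃ v : M, Tendsto (fun n => dL0 μ (pn (u n - v)) 0) atTop (nhds 0)

/-- The pointwise norm of a Banach `L⁰(𝕏)`-module, with the measure explicit. -/
noncomputable def pn (μ : Measure X) [SFinite μ] {M : Type*} [AddCommGroup M]
    [Module (L0 μ) M] [BanachMod μ M] (v : M) : L0 μ :=
  BanachMod.pn v

/-- The distance on a Banach `L⁰(𝕏)`-module. -/
noncomputable def dM (μ : Measure X) [SFinite μ] {M : Type*} [AddCommGroup M]
    [Module (L0 μ) M] [BanachMod μ M] (v w : M) : ℝ :=
  dL0 μ (pn μ (v - w)) 0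

section Defs

variable (μ : Measure X) [SFinite μ]
variable {M N : Type*} [AddCommGroup M] [Module (L0 μ) M] [BanachMod μ M]
  [AddCommGroup N] [Module (L0 μ) N] [BanachMod μ N]

/-- The set of admissible bounds of a map between Banach `L⁰(𝕏)`-modules; the pointwise norm
`|T|` of a homomorphism is the infimum of this set. -/
def homBddSet (T : M → N) : Set (L0 μ) :=
  {g | 0 ≤ g ∧ ∀ v, pn μ (T v) ≤ g * pn μ v}

/-- A homomorphism of Banach `L⁰(𝕏)`-modules: an `L⁰(𝕏)`-linear map admitting a bound
`g ∈ L⁰(𝕏)⁺` with `|T v| ≤ g |v|` (equivalently, `L⁰(𝕏)`-linear and continuous). -/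
def IsHom (T : M →ₗ[L0 μ] N) : Prop :=
  ∃ g, g ∈ homBddSet μ (⇑T)

/-- The set of admissible bounds of an `L⁰(𝕏)`-valued map (for elements of the dual module). -/
def dualBddSet (ω : M → L0 μ) : Set (L0 μ) :=
  {g | 0 ≤ g ∧ ∀ v, |ω v| ≤ g * pn μ v}

/-- Membership in the dual module `ℳ*`: an `L⁰(𝕏)`-linear map `ω : ℳ → L⁰(𝕏)` admitting a
bound `g ∈ L⁰(𝕏)⁺` with `|ω v| ≤ g |v|`. -/
def IsDual (ω : M →ₗ[L0 μ] L0 μ) : Prop :=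
  ∃ g, g ∈ dualBddSet μ (⇑ω)

/-- Membership in the unit disc `𝔻_{ℳ*}` of the dual module: `|ω| ≤ 1`, equivalently
`|ω v| ≤ |v|` for every `v`. -/
def InDualDisc (ω : M →ₗ[L0 μ] L0 μ) : Prop :=
  ∀ v, |ω v| ≤ pn μ v

/-- The family of pointwise norms `|s - ∑_{i ∈ F ∪ G} v i|` for `G` finite disjoint from `F`,
whose `F`-indexed inf-sup being `0` defines `s = ∑_{i∈I} v i`. -/
def sumUB {I : Type*} (v : I → M) (s : M) (F : Finset I) : Set (L0 μ) :=
  {g | ∃ G : Finset I, Disjoint G F ∧ g = pn μ (s - (∑ i ∈ F, v i + ∑ i ∈ G, v i))}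

/-- `HasSumMod μ v s` means that the family `{v_i}` is summable in the Banach `L⁰(𝕏)`-module
with sum `s`, i.e. `⋀_F ⋁_G |s - ∑_{i ∈ F ∪ G} v_i| = 0` (the inner suprema being the values
of `b`, and the outer infimum being `0`). -/
def HasSumMod {I : Type*} (v : I → M) (s : M) : Prop :=
  ∃ b : Finset I → L0 μ, (∀ F, IsLUB (sumUB μ v s F) (b F)) ∧ IsGLB (Set.range b) 0

/-- A family in a Banach `L⁰(𝕏)`-module is summable if it has a sum. -/
def SummableMod {I : Type*} (v : I → M) : Prop :=
  ∃ s, HasSumMod μ v s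

/-- The partial sums `∑_{i ∈ F} |v i|` of the pointwise norms of a family; the element `|v|₁`
of `ℓ₁(I, ℳ)` is the supremum of this set. -/
def l1PartialSums {I : Type*} (v : I → M) : Set (L0 μ) :=
  {g | ∃ F : Finset I, g = ∑ i ∈ F, pn μ (v i)}

/-- Membership in `ℓ₁(I, ℳ)`: the partial sums of the pointwise norms admit a supremum
(equivalently, an upper bound) in `L⁰(𝕏)`. -/
def Meml1 {I : Type*} (v : I → M) : Prop :=
  ∃ b, IsLUB (l1PartialSums μ v) b

/-- The partial sums `∑_{i ∈ F} |v i|` for an `L⁰(𝕏)`-valued family. -/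
def l1PartialSumsF {I : Type*} (v : I → L0 μ) : Set (L0 μ) :=
  {g | ∃ F : Finset I, g = ∑ i ∈ F, |v i|}

/-- Membership in `ℓ₁(I, L⁰(𝕏))`. -/
def Meml1F {I : Type*} (v : I → L0 μ) : Prop :=
  ∃ b, IsLUB (l1PartialSumsF μ v) b

/-- The set whose infimum defines the projective pointwise norm: all values
`∑_{i=1}^n |v_i||w_i|` over representations `α = ∑_{i=1}^n v_i ⊗ w_i`. -/
def piReps (α : M ⊗[L0 μ] N) : Set (L0 μ) :=
  {g | ∃ (n : ℕ) (v : Fin n → M) (w : Fin n → N),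
    α = ∑ i, v i ⊗ₜ[L0 μ] w i ∧ g = ∑ i, pn μ (v i) * pn μ (w i)}

/-- The set whose supremum defines the injective pointwise norm: all values
`|∑_{i=1}^n ω(v_i) η(w_i)|` over representations `α = ∑_{i=1}^n v_i ⊗ w_i` and elements
`ω ∈ 𝔻_{ℳ*}`, `η ∈ 𝔻_{𝒩*}`. -/
def epsReps (α : M ⊗[L0 μ] N) : Set (L0 μ) :=
  {g | ∃ (n : ℕ) (v : Fin n → M) (w : Fin n → N)
    (ω : M →ₗ[L0 μ] L0 μ) (η : N →ₗ[L0 μ] L0 μ), InDualDisc μ ω ∧ InDualDisc μ η ∧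
    α = ∑ i, v i ⊗ₜ[L0 μ] w i ∧ g = |∑ i, ω (v i) * η (w i)|}

/-- `IsPiTensor μ M N P e` states that the Banach `L⁰(𝕏)`-module `P`, together with the
`L⁰(𝕏)`-linear map `e` defined on the algebraic tensor product, realizes the projective
tensor product `ℳ ⊗̂_π 𝒩`: the pointwise norm of `e α` is the projective pointwise norm
`|α|_π` and the image of `e` is dense. -/
structure IsPiTensor (M N P : Type*) [AddCommGroup M] [Module (L0 μ) M] [BanachMod μ M]
    [AddCommGroup N] [Module (L0 μ) N] [BanachMod μ N]
    [AddCommGroup P] [Module (L0 μ) P] [BanachMod μ P]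
    (e : M ⊗[L0 μ] N →ₗ[L0 μ] P) : Prop where
  pn_emb : ∀ α : M ⊗[L0 μ] N, IsGLB (piReps μ α) (pn μ (e α))
  dense : ∀ p : P, ∀ ε : ℝ, 0 < ε → ∃ α : M ⊗[L0 μ] N, dM μ (e α) p < ε

/-- `IsEpsTensor μ M N P e` states that the Banach `L⁰(𝕏)`-module `P`, together with the
`L⁰(𝕏)`-linear map `e` defined on the algebraic tensor product, realizes the injective
tensor product `ℳ ⊗̂_ε 𝒩`: the pointwise norm of `e α` is the injective pointwise norm
`|α|_ε` and the image of `e` is dense. -/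
structure IsEpsTensor (M N P : Type*) [AddCommGroup M] [Module (L0 μ) M] [BanachMod μ M]
    [AddCommGroup N] [Module (L0 μ) N] [BanachMod μ N]
    [AddCommGroup P] [Module (L0 μ) P] [BanachMod μ P]
    (e : M ⊗[L0 μ] N →ₗ[L0 μ] P) : Prop where
  pn_emb : ∀ α : M ⊗[L0 μ] N, IsLUB (epsReps μ α) (pn μ (e α))
  dense : ∀ p : P, ∀ ε : ℝ, 0 < ε → ∃ α : M ⊗[L0 μ] N, dM μ (e α) p < ε

end Defs

/-- The set `{ |v(p)| : p ∈ Ω }` of pointwise norms of the values of a module-valued map;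
the map `v` is order-bounded when this set has a supremum `|v| = ⋁_{p ∈ Ω} |v(p)|`. -/
def rangePn (μ : Measure X) [SFinite μ] {M : Type*} [AddCommGroup M] [Module (L0 μ) M]
    [BanachMod μ M] {Ω : Type*} (v : Ω → M) : Set (L0 μ) :=
  {g | ∃ p : Ω, g = pn μ (v p)}

/-- A map `v : Ω → ℳ` is order-bounded if `⋁_{p ∈ Ω} |v(p)|` exists in `L⁰(𝕏)⁺`. -/
def OrderBounded (μ : Measure X) [SFinite μ] {M : Type*} [AddCommGroup M] [Module (L0 μ) M]
    [BanachMod μ M] {Ω : Type*} (v : Ω → M) : Prop :=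
  ∃ b, IsLUB (rangePn μ v) b

/-- The set `{ |v(p) - v(q)| : (p,q) ∈ 𝒰 }` whose supremum is `Var(v; 𝒰)`. -/
def varSet (μ : Measure X) [SFinite μ] {M : Type*} [AddCommGroup M] [Module (L0 μ) M]
    [BanachMod μ M] {Ω : Type*} (v : Ω → M) (U : Set (Ω × Ω)) : Set (L0 μ) :=
  {g | ∃ pq ∈ U, g = pn μ (v pq.1 - v pq.2)}

/-- A map `v : Ω → ℳ` on a uniform space is uniformly order-continuous if
`⋀_{𝒰 ∈ Φ} Var(v; 𝒰) = 0`, where `Var(v; 𝒰) = ⋁_{(p,q) ∈ 𝒰} |v(p) - v(q)|` (the suprema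
being the values of `V`, and the infimum over all entourages being `0`). -/
def UnifOrdCont (μ : Measure X) [SFinite μ] {M : Type*} [AddCommGroup M] [Module (L0 μ) M]
    [BanachMod μ M] {Ω : Type*} [UniformSpace Ω] (v : Ω → M) : Prop :=
  ∃ V : {U : Set (Ω × Ω) // U ∈ uniformity Ω} → L0 μ,
    (∀ U, IsLUB (varSet μ v U.1) (V U)) ∧ IsGLB (Set.range V) 0

/-- Membership in `UC_ord(Ω; ℳ)`: order-bounded and uniformly order-continuous. -/
def MemUCord (μ : Measure X) [SFinite μ] {M : Type*} [AddCommGroup M] [Module (L0 μ) M]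
    [BanachMod μ M] {Ω : Type*} [UniformSpace Ω] (v : Ω → M) : Prop :=
  OrderBounded μ v ∧ UnifOrdCont μ v

/-- The set `{ |f(p)| : p ∈ K }` for an `L⁰(𝕏)`-valued map. -/
def rangeAbs (μ : Measure X) [SFinite μ] {K : Type*} (f : K → L0 μ) : Set (L0 μ) :=
  {g | ∃ p : K, g = |f p|}

/-- Order-boundedness for `L⁰(𝕏)`-valued maps. -/
def OrderBoundedF (μ : Measure X) [SFinite μ] {K : Type*} (f : K → L0 μ) : Prop :=
  ∃ b, IsLUB (rangeAbs μ f) b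

/-- The set `{ |f(p) - f(q)| : (p,q) ∈ U }` for an `L⁰(𝕏)`-valued map. -/
def varSetF (μ : Measure X) [SFinite μ] {K : Type*} (f : K → L0 μ) (U : Set (K × K)) :
    Set (L0 μ) :=
  {g | ∃ pq ∈ U, g = |f pq.1 - f pq.2|}

/-- Uniform order-continuity for `L⁰(𝕏)`-valued maps on a uniform space. -/
def UnifOrdContF (μ : Measure X) [SFinite μ] {K : Type*} [UniformSpace K] (f : K → L0 μ) :
    Prop :=
  ∃ V : {U : Set (K × K) // U ∈ uniformity K} → L0 μ,
    (∀ U, IsLUB (varSetF μ f U.1) (V U)) ∧ IsGLB (Set.range V) 0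

/-- `(U, ev)` is a realization of `UC_ord(K; L⁰(𝕏))` as a Banach `L⁰(𝕏)`-module. -/
structure IsUCordL0 (μ : Measure X) [SFinite μ] (K : Type*) [UniformSpace K]
    (U : Type*) [AddCommGroup U] [Module (L0 μ) U] [BanachMod μ U]
    (ev : U →ₗ[L0 μ] (K → L0 μ)) : Prop where
  inj : Function.Injective ev
  mem : ∀ u : U, OrderBoundedF μ (ev u) ∧ UnifOrdContF μ (ev u)
  surj : ∀ f : K → L0 μ, OrderBoundedF μ f → UnifOrdContF μ f → ∃ u, ev u = f
  norm : ∀ u : U, IsLUB (rangeAbs μ (ev u)) (pn μ u)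

/-- `(W, ev)` is a realization of `UC_ord(K; ℳ)` as a Banach `L⁰(𝕏)`-module. -/
structure IsUCordMod (μ : Measure X) [SFinite μ] (K : Type*) [UniformSpace K]
    (M : Type*) [AddCommGroup M] [Module (L0 μ) M] [BanachMod μ M]
    (W : Type*) [AddCommGroup W] [Module (L0 μ) W] [BanachMod μ W]
    (ev : W →ₗ[L0 μ] (K → M)) : Prop where
  inj : Function.Injective ev
  mem : ∀ w : W, OrderBounded μ (ev w) ∧ UnifOrdCont μ (ev w)
  surj : ∀ f : K → M, OrderBounded μ f → UnifOrdCont μ f → ∃ w, ev w = f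
  norm : ∀ w : W, IsLUB (rangePn μ (ev w)) (pn μ w)

/-! ### The order structure of `L⁰` -/

section L0order

variable {μ : Measure X}

lemma L0.le_iff {f g : L0 μ} : f ≤ g ↔ ∀ᵐ x ∂μ, f x ≤ g x := AEEqFun.coeFn_le.symm

instance : IsOrderedRing (L0 μ) where
  add_le_add_left a b h c := by
    rw [L0.le_iff] at *
    filter_upwards [h, AEEqFun.coeFn_add a c, AEEqFun.coeFn_add b c] with x h1 h2 h3
    rw [h2, h3]
    simpa using h1
  zero_le_one := by
    rw [L0.le_iff]
    filter_upwards [AEEqFun.coeFn_zero (μ := μ) (β := ℝ),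
      AEEqFun.coeFn_one (μ := μ) (β := ℝ)] with x h1 h2
    simp [h1, h2]
  mul_le_mul_of_nonneg_left a ha b c h := by
    simp only [L0.le_iff] at *
    filter_upwards [h, ha, AEEqFun.coeFn_zero (μ := μ) (β := ℝ), AEEqFun.coeFn_mul a b,
      AEEqFun.coeFn_mul a c] with x h1 h2 h3 h4 h5
    rw [h4, h5]
    rw [h3] at h2
    exact mul_le_mul_of_nonneg_left h1 h2
  mul_le_mul_of_nonneg_right a ha b c h := by
    simp only [L0.le_iff] at *
    filter_upwards [h, ha, AEEqFun.coeFn_zero (μ := μ) (β := ℝ), AEEqFun.coeFn_mul b a,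
      AEEqFun.coeFn_mul c a] with x h1 h2 h3 h4 h5
    rw [h4, h5]
    rw [h3] at h2
    exact mul_le_mul_of_nonneg_right h1 h2

lemma L0.abs_mul (f g : L0 μ) : |f * g| = |f| * |g| := by
  apply AEEqFun.ext
  filter_upwards [AEEqFun.coeFn_abs (f * g), AEEqFun.coeFn_mul f g, AEEqFun.coeFn_mul |f| |g|,
    AEEqFun.coeFn_abs f, AEEqFun.coeFn_abs g] with x h1 h2 h3 h4 h5
  rw [h1, h2, h3]
  simp [h4, h5, _root_.abs_mul]

/-- The measurable inverse: `1 / f` where `f ≠ 0` and `0` elsewhere. -/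
def L0.inv (f : L0 μ) : L0 μ := AEEqFun.compMeasurable (fun t : ℝ => t⁻¹) measurable_inv f

lemma L0.coeFn_inv' (f : L0 μ) : ∀ᵐ x ∂μ, (L0.inv f) x = (f x)⁻¹ :=
  AEEqFun.coeFn_compMeasurable _ _ f

/-- Multiplication by a nonnegative element of `L⁰` preserves suprema. -/
lemma isLUB_mul {S : Set (L0 μ)} (hne : S.Nonempty) {b c : L0 μ} (hb : IsLUB S b) (hc : 0 ≤ c) :
    IsLUB (Set.image (fun s => s * c) S) (b * c) := by
  refine ⟨?_, ?_⟩
  · rintro _ ⟨s, hs, rfl⟩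
    exact mul_le_mul_of_nonneg_right (hb.1 hs) hc
  · intro d hd
    obtain ⟨s₀, hs₀⟩ := hne
    have hz := AEEqFun.coeFn_zero (μ := μ) (β := ℝ)
    have hc' := L0.le_iff.1 hc
    -- the bound `d / c` where `c ≠ 0`, and `b` where `c = 0`
    let t : L0 μ := d * L0.inv c + b * (1 - c * L0.inv c)
    have ht : ∀ᵐ x ∂μ, t x = d x * (c x)⁻¹ + b x * (1 - c x * (c x)⁻¹) := by
      filter_upwards [AEEqFun.coeFn_add (d * L0.inv c) (b * (1 - c * L0.inv c)),
        AEEqFun.coeFn_mul d (L0.inv c), AEEqFun.coeFn_mul b (1 - c * L0.inv c),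
        AEEqFun.coeFn_sub 1 (c * L0.inv c), AEEqFun.coeFn_mul c (L0.inv c), L0.coeFn_inv' c,
        AEEqFun.coeFn_one (μ := μ) (β := ℝ)] with x h1 h2 h3 h4 h5 h6 h7
      simp only [t, h1, Pi.add_apply, h2, h3, Pi.mul_apply, h4, Pi.sub_apply, h5, h6, h7,
        Pi.one_apply]
    have hbt : b ≤ t := by
      refine hb.2 fun s hs => ?_
      rw [L0.le_iff]
      filter_upwards [ht, hc', hz, L0.le_iff.1 (hd ⟨s, hs, rfl⟩), AEEqFun.coeFn_mul s c,
        L0.le_iff.1 (hb.1 hs)] with x h1 h2 h3 h4 h5 h6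
      rw [h1]
      rw [h3] at h2
      rcases eq_or_lt_of_le h2 with h | h
      · simp only [Pi.zero_apply] at h
        simp [← h, h6]
      · simp only [Pi.zero_apply] at h
        rw [mul_inv_cancel₀ h.ne']
        simp only [h5, Pi.mul_apply] at h4
        simpa [← div_eq_mul_inv, le_div_iff₀ h] using h4
    rw [L0.le_iff]
    filter_upwards [ht, hc', hz, L0.le_iff.1 hbt, AEEqFun.coeFn_mul b c,
      L0.le_iff.1 (hd ⟨s₀, hs₀, rfl⟩), AEEqFun.coeFn_mul s₀ c] with x h1 h2 h3 h4 h5 h6 h7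
    rw [h3] at h2
    rw [h1] at h4
    simp only [h7, Pi.mul_apply] at h6
    rw [h5, Pi.mul_apply]
    rcases eq_or_lt_of_le h2 with h | h
    · simp only [Pi.zero_apply] at h
      simpa [← h] using h6
    · simp only [Pi.zero_apply] at h
      rw [mul_inv_cancel₀ h.ne'] at h4
      simpa [← div_eq_mul_inv, le_div_iff₀ h] using h4

variable [SFinite μ]

lemma ae_toFinite_iff {p : X → Prop} : (∀ᵐ x ∂μ.toFinite, p x) ↔ ∀ᵐ x ∂μ, p x := by
  simp only [ae_toFinite]

lemma L0.aesm (f : L0 μ) : AEStronglyMeasurable f μ.toFinite :=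
  f.aestronglyMeasurable.mono_ac (toFinite_absolutelyContinuous μ)

/-- A downward directed family in `L⁰` that is bounded below has an infimum, and this infimum is
approximated in the distance of `L⁰` by members of the family.  The infimum is that of a
decreasing sequence along which `∫ arctan s` tends to its infimum over the family. -/
lemma exists_isGLB_of_directed (S : Set (L0 μ)) (hne : S.Nonempty) (hb : BddBelow S)
    (hd : ∀ a ∈ S, ∀ b ∈ S, ∃ c ∈ S, c ≤ a ∧ c ≤ b) :
    ∃ g, IsGLB S g ∧ ∀ ε : ℝ, 0 < ε → ∃ s ∈ S, dL0 μ s g < ε := by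
  obtain ⟨l, hl⟩ := hb
  set ν := μ.toFinite with hν
  let F : L0 μ → ℝ := fun s => ∫ x, Real.arctan (s x) ∂ν
  have hmeas : ∀ s : L0 μ, AEStronglyMeasurable (fun x => Real.arctan (s x)) ν := fun s =>
    Real.continuous_arctan.comp_aestronglyMeasurable (L0.aesm s)
  have hbd : ∀ t : ℝ, ‖Real.arctan t‖ ≤ Real.pi := fun t => by
    rw [Real.norm_eq_abs, abs_le]
    constructor <;> linarith [Real.arctan_lt_pi_div_two t, Real.neg_pi_div_two_lt_arctan t,
      Real.pi_pos]
  have hint : ∀ s : L0 μ, Integrable (fun x => Real.arctan (s x)) ν := fun s =>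
    Integrable.of_bound (hmeas s) Real.pi (Eventually.of_forall fun x => hbd _)
  have hmono : ∀ s t : L0 μ, s ≤ t → F s ≤ F t := fun s t h =>
    integral_mono_ae (hint s) (hint t) (by
      have := ae_toFinite_iff.2 (L0.le_iff.1 h)
      filter_upwards [this] with x hx using Real.arctan_strictMono.monotone hx)
  have hbb : BddBelow (Set.image F S) := ⟨F l, by
    rintro _ ⟨s, hs, rfl⟩
    exact hmono _ _ (hl hs)⟩
  set m := sInf (Set.image F S) with hm
  have hmS : ∀ s ∈ S, m ≤ F s := fun s hs => csInf_le hbb ⟨s, hs, rfl⟩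
  have hap : ∀ n : ℕ, ∃ s ∈ S, F s < m + 1 / ((n : ℝ) + 1) := fun n => by
    have : m < m + 1 / ((n : ℝ) + 1) := by
      have : 0 < 1 / ((n : ℝ) + 1) := by positivity
      linarith
    obtain ⟨_, ⟨s, hs, rfl⟩, h⟩ := exists_lt_of_csInf_lt (hne.image F) this
    exact ⟨s, hs, h⟩
  choose a haS haF using hap
  choose c hcS hc1 hc2 using hd
  let s : ℕ → S := fun n => Nat.rec ⟨a 0, haS 0⟩
    (fun n t => ⟨c t.1 t.2 (a (n + 1)) (haS _), hcS _ _ _ _⟩) n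
  have hs_anti : ∀ n : ℕ, (s (n + 1)).1 ≤ (s n).1 := by
    intro n
    exact hc1 (s n).1 (s n).2 (a (n + 1)) (haS _)
  have hs_a : ∀ n, (s n).1 ≤ a n := by
    intro n
    cases n with
    | zero => exact le_rfl
    | succ n => exact hc2 (s n).1 (s n).2 (a (n + 1)) (haS _)
  have hsF : Tendsto (fun n => F (s n).1) atTop (nhds m) := by
    refine tendsto_of_tendsto_of_tendsto_of_le_of_le tendsto_const_nhds
      (g := fun _ => m) (h := fun n : ℕ => m + 1 / ((n : ℝ) + 1)) ?_ ?_ ?_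
    · simpa using tendsto_const_nhds.add (tendsto_one_div_add_atTop_nhds_zero_nat (𝕜 := ℝ))
    · intro n; exact hmS _ (s n).2
    · intro n; exact (hmono _ _ (hs_a n)).trans (haF n).le
  have hgm : AEStronglyMeasurable (fun x => ⨅ n, (s n).1 x) μ :=
    (AEMeasurable.iInf fun n => (s n).1.aestronglyMeasurable.aemeasurable).aestronglyMeasurable
  set g : L0 μ := AEEqFun.mk _ hgm with hg
  have hanti_ae : ∀ᵐ x ∂μ, ∀ n, (s (n + 1)).1 x ≤ (s n).1 x :=
    ae_all_iff.2 fun n => L0.le_iff.1 (hs_anti n)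
  have hl_ae : ∀ᵐ x ∂μ, ∀ n, l x ≤ (s n).1 x :=
    ae_all_iff.2 fun n => L0.le_iff.1 (hl (s n).2)
  have hg_ae : ∀ᵐ x ∂μ, g x = ⨅ n, (s n).1 x := AEEqFun.coeFn_mk _ hgm
  have hlim : ∀ᵐ x ∂μ, Tendsto (fun n => (s n).1 x) atTop (nhds (g x)) := by
    filter_upwards [hanti_ae, hl_ae, hg_ae] with x h1 h2 h3
    rw [h3]
    exact tendsto_atTop_ciInf (antitone_nat_of_succ_le h1) ⟨l x, by rintro _ ⟨n, rfl⟩; exact h2 n⟩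
  have hFg : F g = m := by
    refine tendsto_nhds_unique ?_ hsF
    refine tendsto_integral_of_dominated_convergence (fun _ => Real.pi) (fun n => hmeas _)
      (integrable_const _) (fun n => Eventually.of_forall fun x => hbd _) ?_
    filter_upwards [ae_toFinite_iff.2 hlim] with x hx
    exact (Real.continuous_arctan.tendsto _).comp hx
  refine ⟨g, ⟨?_, ?_⟩, ?_⟩
  · intro t ht
    have h1 : m ≤ F (g ⊓ t) := by
      have : Tendsto (fun n => F ((s n).1 ⊓ t)) atTop (nhds (F (g ⊓ t))) := by
        refine tendsto_integral_of_dominated_convergence (fun _ => Real.pi) (fun n => hmeas _)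
          (integrable_const _) (fun n => Eventually.of_forall fun x => hbd _) ?_
        have h2 : ∀ᵐ x ∂μ, ∀ n, ((s n).1 ⊓ t : L0 μ) x = (s n).1 x ⊓ t x :=
          ae_all_iff.2 fun n => AEEqFun.coeFn_inf _ _
        filter_upwards [ae_toFinite_iff.2 hlim, ae_toFinite_iff.2 h2,
          ae_toFinite_iff.2 (AEEqFun.coeFn_inf g t)] with x hx h2 h3
        refine (Real.continuous_arctan.tendsto _).comp ?_
        simp only [h2, h3]
        exact hx.inf_nhds tendsto_const_nhds
      refine ge_of_tendsto' this fun n => ?_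
      refine (hmS _ (hcS _ (s n).2 _ ht)).trans (hmono _ _ (le_inf (hc1 _ _ _ _) (hc2 _ _ _ _)))
    have h2 : ∫ x, (Real.arctan (g x) - Real.arctan ((g ⊓ t : L0 μ) x)) ∂ν = 0 := by
      rw [integral_sub (hint _) (hint _)]
      have := hmono _ _ (inf_le_left : g ⊓ t ≤ g)
      change F g - F (g ⊓ t) = 0
      linarith
    have hnn : 0 ≤ᵐ[ν] fun x => Real.arctan (g x) - Real.arctan ((g ⊓ t : L0 μ) x) := by
      filter_upwards [ae_toFinite_iff.2 (L0.le_iff.1 (inf_le_left : g ⊓ t ≤ g))] with x hx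
      exact sub_nonneg.2 (Real.arctan_strictMono.monotone hx)
    rw [integral_eq_zero_iff_of_nonneg_ae hnn ((hint _).sub (hint _))] at h2
    have h3 : g ≤ g ⊓ t := by
      rw [L0.le_iff]
      filter_upwards [ae_toFinite_iff.1 h2] with x hx
      exact (Real.arctan_injective (sub_eq_zero.1 hx)).le
    exact h3.trans inf_le_right
  · intro t ht
    rw [L0.le_iff]
    have h1 : ∀ᵐ x ∂μ, ∀ n, t x ≤ (s n).1 x :=
      ae_all_iff.2 fun n => L0.le_iff.1 (ht (s n).2)
    filter_upwards [h1, hg_ae] with x h2 h3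
    rw [h3]
    exact le_ciInf h2
  · intro ε hε
    have : Tendsto (fun n => dL0 μ (s n).1 g) atTop (nhds 0) := by
      have h0 : (0 : ℝ) = ∫ x, min |g x - g x| 1 ∂ν := by simp
      rw [h0]
      refine tendsto_integral_of_dominated_convergence (fun _ => 1) (fun n => ?_)
        (integrable_const _) (fun n => Eventually.of_forall fun x => ?_) ?_
      · exact (((L0.aesm (s n).1).sub (L0.aesm g)).norm).inf aestronglyMeasurable_const
      · rw [Real.norm_eq_abs, abs_of_nonneg (by positivity)]
        exact min_le_right _ _
      · filter_upwards [ae_toFinite_iff.2 hlim] with x hx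
        exact ((hx.sub tendsto_const_nhds).abs).min tendsto_const_nhds
    obtain ⟨n, hn⟩ := (this.eventually (gt_mem_nhds hε)).exists
    exact ⟨(s n).1, (s n).2, hn⟩

/-- Dedekind completeness of `L⁰`. -/
lemma exists_isLUB_of_bdd (S : Set (L0 μ)) (hne : S.Nonempty) (hb : BddAbove S) :
    ∃ g, IsLUB S g := by
  obtain ⟨g, hg, -⟩ := exists_isGLB_of_directed (upperBounds S) hb
    (hne.mono (subset_lowerBounds_upperBounds S))
    (fun a ha b hb => ⟨a ⊓ b, fun s hs => le_inf (ha hs) (hb hs), inf_le_left, inf_le_right⟩)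
  exact ⟨g, isGLB_upperBounds.1 hg⟩

/-! ### The distance of `L⁰` -/

lemma dL0_eq (f : L0 μ) : dL0 μ f 0 = ∫ x, min |f x| 1 ∂μ.toFinite := by
  refine integral_congr_ae ?_
  filter_upwards [ae_toFinite_iff.2 (AEEqFun.coeFn_zero (μ := μ) (β := ℝ))] with x hx
  simp [hx]

lemma integrable_min (f : L0 μ) : Integrable (fun x => min |f x| 1) μ.toFinite := by
  refine Integrable.of_bound ((L0.aesm f).norm.inf aestronglyMeasurable_const) 1
    (Eventually.of_forall fun x => ?_)
  rw [Real.norm_eq_abs, abs_of_nonneg (by positivity)]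
  exact min_le_right _ _

lemma dL0_nonneg (f : L0 μ) : 0 ≤ dL0 μ f 0 := integral_nonneg fun x => by positivity

lemma dL0_mono {f g : L0 μ} (hf : 0 ≤ f) (h : f ≤ g) : dL0 μ f 0 ≤ dL0 μ g 0 := by
  rw [dL0_eq, dL0_eq]
  refine integral_mono_ae (integrable_min f) (integrable_min g) ?_
  filter_upwards [ae_toFinite_iff.2 (L0.le_iff.1 hf), ae_toFinite_iff.2 (L0.le_iff.1 h),
    ae_toFinite_iff.2 (AEEqFun.coeFn_zero (μ := μ) (β := ℝ))] with x h1 h2 h3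
  rw [h3] at h1
  exact min_le_min_right _ (abs_le_abs_of_nonneg h1 h2)

lemma dL0_add (f g : L0 μ) : dL0 μ (f + g) 0 ≤ dL0 μ f 0 + dL0 μ g 0 := by
  rw [dL0_eq, dL0_eq, dL0_eq, ← integral_add (integrable_min f) (integrable_min g)]
  refine integral_mono_ae (integrable_min _) ((integrable_min f).add (integrable_min g)) ?_
  filter_upwards [ae_toFinite_iff.2 (AEEqFun.coeFn_add f g)] with x h1
  simp only [h1, Pi.add_apply]
  have := abs_add_le (f x) (g x)
  have h2 := abs_nonneg (f x)
  have h3 := abs_nonneg (g x)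
  rcases min_cases |f x| 1 with h | h <;> rcases min_cases |g x| 1 with h' | h' <;>
  rcases min_cases |f x + g x| 1 with hmin | hmin <;> linarith

lemma eq_zero_of_dL0 {f : L0 μ} (h : ∀ ε : ℝ, 0 < ε → dL0 μ f 0 < ε) : f = 0 := by
  have h0 : dL0 μ f 0 = 0 := le_antisymm (le_of_forall_pos_lt_add fun ε hε => by simpa using h ε hε)
    (dL0_nonneg f)
  rw [dL0_eq, integral_eq_zero_iff_of_nonneg (fun x => by positivity) (integrable_min f)] at h0
  apply AEEqFun.ext
  filter_upwards [ae_toFinite_iff.1 h0, AEEqFun.coeFn_zero (μ := μ) (β := ℝ)] with x h1 h2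
  rw [h2]
  simp only [Pi.zero_apply] at h1 ⊢
  rcases min_cases |f x| 1 with h | h
  · exact abs_eq_zero.1 (h.1.symm.trans h1)
  · linarith

/-- Continuity at `0` of multiplication by a fixed `f ∈ L⁰`: off a set of small measure, `f` is
bounded by a constant. -/
lemma dL0_mul (f : L0 μ) {ε : ℝ} (hε : 0 < ε) :
    ∃ δ : ℝ, 0 < δ ∧ ∀ h : L0 μ, dL0 μ h 0 < δ → dL0 μ (f * h) 0 < ε := by
  have key : Tendsto (fun n : ℕ => ∫ x, min (|f x| / ((n : ℝ) + 1)) 1 ∂μ.toFinite)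
      atTop (nhds (∫ _x, (0 : ℝ) ∂μ.toFinite)) := by
    refine tendsto_integral_of_dominated_convergence (fun _ => 1) (fun n => ?_)
        (integrable_const _) (fun n => Eventually.of_forall fun x => ?_) ?_
    · exact ((L0.aesm f).norm.mul_const _).inf aestronglyMeasurable_const
    · rw [Real.norm_eq_abs, abs_of_nonneg (by positivity)]
      exact min_le_right _ _
    · refine Eventually.of_forall fun x => ?_
      have := (tendsto_one_div_add_atTop_nhds_zero_nat (𝕜 := ℝ)).const_mul |f x|
      have h2 := this.min (tendsto_const_nhds (x := (1 : ℝ)))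
      simpa [div_eq_mul_inv] using h2
  simp only [integral_zero] at key
  obtain ⟨N, hN⟩ := (key.eventually (gt_mem_nhds (half_pos hε))).exists
  refine ⟨ε / 2 / ((N : ℝ) + 1), by positivity, fun h hh => ?_⟩
  have hi : Integrable (fun x => min (|f x| / ((N : ℝ) + 1)) 1) μ.toFinite := by
    refine Integrable.of_bound (((L0.aesm f).norm.mul_const _).inf aestronglyMeasurable_const) 1
      (Eventually.of_forall fun x => ?_)
    rw [Real.norm_eq_abs, abs_of_nonneg (by positivity)]
    exact min_le_right _ _
  have hb : dL0 μ (f * h) 0 ≤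
      (∫ x, min (|f x| / ((N : ℝ) + 1)) 1 ∂μ.toFinite) + ((N : ℝ) + 1) * dL0 μ h 0 := by
    rw [dL0_eq, dL0_eq, ← integral_const_mul,
      ← integral_add hi ((integrable_min h).const_mul _)]
    refine integral_mono_ae (integrable_min _) (hi.add ((integrable_min h).const_mul _)) ?_
    filter_upwards [ae_toFinite_iff.2 (AEEqFun.coeFn_mul f h)] with x h1
    simp only [h1, Pi.mul_apply, _root_.abs_mul]
    have h2 := abs_nonneg (f x)
    have h3 := abs_nonneg (h x)
    have hN1 : (1 : ℝ) ≤ (N : ℝ) + 1 := by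
      have : (0 : ℝ) ≤ N := Nat.cast_nonneg N
      linarith
    have h0 : 0 ≤ ((N : ℝ) + 1) * min |h x| 1 := by positivity
    rcases le_total 1 (|f x| / ((N : ℝ) + 1)) with h4 | h4
    · rw [min_eq_right h4]
      exact (min_le_right _ _).trans (by linarith)
    · rw [min_eq_left h4]
      have h5 : 0 ≤ |f x| / ((N : ℝ) + 1) := by positivity
      rw [div_le_one (by positivity)] at h4
      rcases le_total |h x| 1 with h6 | h6
      · rw [min_eq_left h6]
        exact (min_le_left _ _).trans (by nlinarith)
      · rw [min_eq_right h6]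
        exact (min_le_right _ _).trans (by linarith)
  have h7 : ((N : ℝ) + 1) * dL0 μ h 0 < ε / 2 := by
    rw [lt_div_iff₀ (by positivity)] at hh
    linarith
  linarith

end L0order

/-! ### Pointwise norms and the Hahn–Banach theorem -/

section HahnBanach

variable {μ : Measure X} [SFinite μ]
variable {M : Type*} [AddCommGroup M] [Module (L0 μ) M] [BanachMod μ M]

lemma pn_nonneg (v : M) : 0 ≤ pn μ v := BanachMod.pn_nonneg v

lemma pn_eq_zero {v : M} : pn μ v = 0 ↔ v = 0 := BanachMod.pn_eq_zero v

lemma pn_zero : pn μ (0 : M) = 0 := pn_eq_zero.2 rfl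

lemma pn_add_le (v w : M) : pn μ (v + w) ≤ pn μ v + pn μ w := BanachMod.pn_add_le v w

lemma pn_smul (f : L0 μ) (v : M) : pn μ (f • v) = |f| * pn μ v := BanachMod.pn_smul f v

lemma pn_neg (v : M) : pn μ (-v) = pn μ v := by
  have h : |(-1 : L0 μ)| = 1 := by rw [abs_neg, abs_of_nonneg zero_le_one]
  rw [← neg_one_smul (L0 μ) v, pn_smul, h, one_mul]

lemma pn_sub_comm (v w : M) : pn μ (v - w) = pn μ (w - v) := by rw [← pn_neg, neg_sub]

lemma pn_sub_le (u v w : M) : pn μ (u - w) ≤ pn μ (u - v) + pn μ (v - w) := by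
  rw [← sub_add_sub_cancel u v w]; exact pn_add_le _ _

lemma pn_le_add (v w : M) : pn μ v ≤ pn μ w + pn μ (v - w) := by
  have := pn_add_le (μ := μ) w (v - w)
  rwa [add_sub_cancel] at this

lemma pn_sum_le {ι : Type*} (s : Finset ι) (v : ι → M) :
    pn μ (∑ i ∈ s, v i) ≤ ∑ i ∈ s, pn μ (v i) := by
  classical
  induction s using Finset.induction_on with
  | empty => simp [pn_zero]
  | insert a s ha ih =>
    rw [Finset.sum_insert ha, Finset.sum_insert ha]
    exact (pn_add_le _ _).trans (add_le_add le_rfl ih)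

/-- The extension of `ω` by the value `a` at `z` is still dominated by the pointwise norm, if `a` lies
between the two families of bounds coming from the coefficients `-1` and `1`.  Dividing by `|c|`
where `c ≠ 0` reduces a general coefficient `c` to the cases `c = ±1`. -/
lemma hb_dominated {N : Submodule (L0 μ) M} (ω : N →ₗ[L0 μ] L0 μ)
    (hω : ∀ n : N, ω n ≤ pn μ (n : M)) (z : M) (a : L0 μ)
    (h1 : ∀ n : N, ω n - pn μ ((n : M) - z) ≤ a)
    (h2 : ∀ n : N, a ≤ pn μ ((n : M) + z) - ω n) (n : N) (c : L0 μ) :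
    ω n + c * a ≤ pn μ ((n : M) + c • z) := by
  set d : L0 μ := |L0.inv c| with hd
  have hda : ∀ᵐ x ∂μ, d x = |(c x)⁻¹| := by
    filter_upwards [AEEqFun.coeFn_abs (L0.inv c), L0.coeFn_inv' c] with x h3 h4
    rw [hd, h3, h4]
  have e1 := h1 (d • n)
  have e2 := h2 (d • n)
  rw [map_smul, smul_eq_mul] at e1 e2
  have e3 : |c| * pn μ ((d • n : M) + z) ≤
      pn μ ((n : M) + c • z) + |c * d - 1| * pn μ (n : M) := by
    rw [← pn_smul, ← pn_smul]
    refine le_trans (le_of_eq ?_) (pn_add_le _ _)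
    congr 1
    module
  have e4 : |c| * pn μ ((d • n : M) - z) ≤
      pn μ ((n : M) + c • z) + |c * d + 1| * pn μ (n : M) := by
    rw [← pn_smul, ← pn_smul, ← pn_neg]
    have := pn_add_le (μ := μ) ((n : M) + c • z) (-((c * d + 1) • (n : M)))
    rw [pn_neg] at this
    refine le_trans (le_of_eq ?_) this
    congr 1
    module
  have e5 : ω n ≤ pn μ ((n : M) + c • z) + |c| * pn μ z := by
    rw [← pn_smul, ← pn_neg (c • z)]
    refine (hω n).trans (le_trans (le_of_eq ?_) (pn_add_le _ _))
    congr 1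
    module
  have e1' : d * ω n - pn μ ((d • n : M) - z) ≤ a := e1
  have e2' : a ≤ pn μ ((d • n : M) + z) - d * ω n := e2
  clear e1 e2
  generalize pn μ ((d • n : M) - z) = P1 at *
  generalize pn μ ((d • n : M) + z) = P2 at *
  generalize pn μ ((n : M) + c • z) = P at *
  generalize pn μ (n : M) = Q at *
  generalize pn μ z = R at *
  generalize ω n = w at *
  rw [L0.le_iff] at *
  filter_upwards [hda, e1', e2', e3, e4, e5, AEEqFun.coeFn_add w (c * a), AEEqFun.coeFn_mul c a,
    AEEqFun.coeFn_sub (d * w) P1, AEEqFun.coeFn_sub P2 (d * w), AEEqFun.coeFn_mul d w,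
    AEEqFun.coeFn_mul |c| P2, AEEqFun.coeFn_mul |c| P1, AEEqFun.coeFn_abs c,
    AEEqFun.coeFn_add P (|c * d - 1| * Q), AEEqFun.coeFn_mul (|c * d - 1|) Q,
    AEEqFun.coeFn_abs (c * d - 1), AEEqFun.coeFn_sub (c * d) 1, AEEqFun.coeFn_mul c d,
    AEEqFun.coeFn_add P (|c * d + 1| * Q), AEEqFun.coeFn_mul (|c * d + 1|) Q,
    AEEqFun.coeFn_abs (c * d + 1), AEEqFun.coeFn_add (c * d) 1,
    AEEqFun.coeFn_add P (|c| * R), AEEqFun.coeFn_mul |c| R,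
    AEEqFun.coeFn_one (μ := μ) (β := ℝ)] with x hd e1 e2 e3 e4 e5 k1 k2 k3 k4 k5 k6 k7 k8 k9 k10
      k11 k12 k13 k14 k15 k16 k17 k18 k19 k20
  simp only [k1, k2, k3, k4, k5, k6, k7, k8, k9, k10, k11, k12, k13, k14, k15, k16, k17, k18, k19,
    k20, Pi.add_apply, Pi.mul_apply, Pi.sub_apply, Pi.one_apply, hd] at *
  rcases lt_trichotomy (c x) 0 with hc | hc | hc
  · have h3 : c x * |(c x)⁻¹| = -1 := by
      rw [abs_inv, abs_of_neg hc, inv_neg, mul_neg, mul_inv_cancel₀ hc.ne]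
    rw [h3] at e4
    rw [abs_of_neg hc] at e4
    have h4 := mul_le_mul_of_nonneg_left e1 (neg_pos.2 hc).le
    have h5 : -c x * (|(c x)⁻¹| * w x - P1 x) = w x - -c x * P1 x := by
      linear_combination (-w x) * h3
    simp at e4
    linarith
  · simp [hc] at e5 ⊢
    exact e5
  · have h3 : c x * |(c x)⁻¹| = 1 := by
      rw [abs_inv, abs_of_pos hc]; field_simp
    rw [h3] at e3
    rw [abs_of_pos hc] at e3
    have h4 := mul_le_mul_of_nonneg_left e2 hc.le
    have h5 : c x * (P2 x - |(c x)⁻¹| * w x) = c x * P2 x - w x := by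
      linear_combination (-w x) * h3
    simp at e3
    linarith

/-- One-step extension of a dominated functional to a submodule containing `z`; the value at `z` is
the supremum of the lower bounds, which exists by Dedekind completeness of `L⁰`. -/
lemma hb_step (f : M →ₗ.[L0 μ] L0 μ) (hf : ∀ x : f.domain, f x ≤ pn μ (x : M))
    (z : M) :
    ∃ g : M →ₗ.[L0 μ] L0 μ, f ≤ g ∧ z ∈ g.domain ∧ ∀ x : g.domain, g x ≤ pn μ (x : M) := by
  obtain ⟨a, ha⟩ := exists_isLUB_of_bdd
    (Set.range fun n : f.domain => f n - pn μ ((n : M) - z)) ⟨_, ⟨0, rfl⟩⟩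
    ⟨pn μ (((0 : f.domain) : M) + z) - f 0, by
      rintro _ ⟨n, rfl⟩
      have h1 := hf n
      have h2 := pn_add_le (μ := μ) ((n : M) - z) z
      simp only [sub_add_cancel, ZeroMemClass.coe_zero, zero_add, LinearPMap.map_zero,
        sub_zero] at h1 h2 ⊢
      rw [sub_le_iff_le_add, add_comm]
      exact h1.trans h2⟩
  have h1 : ∀ n : f.domain, f n - pn μ ((n : M) - z) ≤ a := fun n => ha.1 ⟨n, rfl⟩
  have h2 : ∀ n : f.domain, a ≤ pn μ ((n : M) + z) - f n := fun n => ha.2 (by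
    rintro _ ⟨n', rfl⟩
    have h3 := hf (n' + n)
    have h4 := pn_add_le (μ := μ) ((n' : M) - z) ((n : M) + z)
    rw [LinearPMap.map_add] at h3
    have h5 : ((n' : M) - z) + ((n : M) + z) = ((n' + n : f.domain) : M) := by
      push_cast; abel
    rw [h5] at h4
    have h6 := h3.trans h4
    simp only
    rw [sub_le_iff_le_add]
    have h7 := sub_le_sub_right h6 (f n)
    rw [add_sub_cancel_right] at h7
    refine h7.trans (le_of_eq ?_)
    abel)
  have hdom := hb_dominated f.toFun hf z a h1 h2
  have hdom : ∀ (n : f.domain) (c : L0 μ), f n + c * a ≤ pn μ ((n : M) + c • z) := hdom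
  have hcons : ∀ (n : f.domain) (c : L0 μ), (n : M) = c • z → f n = c * a := by
    intro n c h
    apply le_antisymm
    · have := hdom n (-c)
      rw [h, neg_smul, add_neg_cancel, pn_zero, neg_mul, ← sub_eq_add_neg, sub_nonpos] at this
      exact this
    · have := hdom (-n) c
      rw [NegMemClass.coe_neg, h, neg_add_cancel, pn_zero, LinearPMap.map_neg, neg_add_nonpos_iff]
        at this
      exact this
  have H0 : ∀ c : L0 μ, c • z = 0 → c • a = 0 := fun c hc => by
    have := hcons 0 c (by simp [hc])
    rw [LinearPMap.map_zero] at this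
    exact this.symm
  have H : ∀ (x : f.domain)
      (y : (LinearPMap.mkSpanSingleton' (σ := RingHom.id (L0 μ)) z a H0).domain),
      (x : M) = y → f x = LinearPMap.mkSpanSingleton' (σ := RingHom.id (L0 μ)) z a H0 y := by
    rintro x ⟨y, hy⟩ h
    obtain ⟨c, rfl⟩ := Submodule.mem_span_singleton.1 hy
    rw [LinearPMap.mkSpanSingleton'_apply]
    exact hcons x c h
  refine ⟨f.sup _ H, LinearPMap.left_le_sup _ _ _, ?_, ?_⟩
  · exact (LinearPMap.right_le_sup _ _ H).1 (Submodule.mem_span_singleton_self z)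
  · rintro ⟨x, hx⟩
    obtain ⟨n, hn, y, hy, rfl⟩ := Submodule.mem_sup.1 hx
    obtain ⟨c, rfl⟩ := Submodule.mem_span_singleton.1 hy
    refine (LinearPMap.sup_apply H ⟨n, hn⟩ ⟨c • z, hy⟩ ⟨_, hx⟩ rfl).le.trans ?_
    rw [LinearPMap.mkSpanSingleton'_apply]
    exact hdom ⟨n, hn⟩ c

/-- Hahn–Banach theorem for Banach `L⁰`-modules: every `v` is normed by a functional in the unit
disc of the dual. -/
lemma exists_dual_eq_pn (v : M) : ∃ η : M →ₗ[L0 μ] L0 μ, InDualDisc μ η ∧ η v = pn μ v := by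
  have H0 : ∀ c : L0 μ, c • v = 0 → c • pn μ v = 0 := fun c hc => by
    have h := pn_smul c v
    rw [hc, pn_zero, ← abs_of_nonneg (pn_nonneg (μ := μ) v), ← L0.abs_mul] at h
    exact le_antisymm ((le_abs_self (c * pn μ v)).trans h.ge)
      (neg_nonpos.1 ((neg_le_abs (c * pn μ v)).trans h.ge))
  set S := {f : M →ₗ.[L0 μ] L0 μ | ∀ x : f.domain, f x ≤ pn μ (x : M)} with hS
  have h0 : LinearPMap.mkSpanSingleton' v (pn μ v) H0 ∈ S := by
    rintro ⟨y, hy⟩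
    obtain ⟨c, rfl⟩ := Submodule.mem_span_singleton.1 hy
    rw [LinearPMap.mkSpanSingleton'_apply, pn_smul]
    exact mul_le_mul_of_nonneg_right (le_abs_self c) (pn_nonneg _)
  have hSc : ∀ c, c ⊆ S → IsChain (· ≤ ·) c → ∀ y ∈ c, ∃ ub ∈ S, ∀ z ∈ c, z ≤ ub := by
    intro c hcs c_chain y hy
    have cne : c.Nonempty := ⟨y, hy⟩
    have hcd : DirectedOn (· ≤ ·) c := c_chain.directedOn
    refine ⟨LinearPMap.sSup c hcd, ?_, fun _ ↦ LinearPMap.le_sSup hcd⟩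
    rintro ⟨x, hx⟩
    obtain ⟨f, hfc, hfx⟩ := (LinearPMap.mem_domain_sSup_iff cne hcd).1 hx
    have h1 := LinearPMap.sSup_apply hcd hfc ⟨x, hfx⟩
    rw [h1]
    exact hcs hfc ⟨x, hfx⟩
  obtain ⟨q, hpq, hqs, hq⟩ := zorn_le_nonempty₀ S hSc _ h0
  have htop : ∀ z, z ∈ q.domain := by
    intro z
    by_contra hz
    obtain ⟨g, hg1, hg2, hg3⟩ := hb_step q hqs z
    exact hz ((hq hg3 hg1).1 hg2)
  let η : M →ₗ[L0 μ] L0 μ := q.toFun.comp (LinearMap.id.codRestrict q.domain htop)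
  have hη : ∀ w, η w = q ⟨w, htop w⟩ := fun w => rfl
  refine ⟨η, fun w => ?_, ?_⟩
  · rw [abs_le']
    refine ⟨hqs ⟨w, htop w⟩, ?_⟩
    rw [← map_neg, ← pn_neg w]
    exact hqs ⟨-w, htop (-w)⟩
  · rw [hη, ← hpq.2 (x := ⟨v, Submodule.mem_span_singleton_self v⟩) rfl]
    exact LinearPMap.mkSpanSingleton'_apply_self _ _ _ _

end HahnBanach

/-! ### Extension of isometries with dense range -/

section Extension

variable {μ : Measure X} [SFinite μ]
variable {M : Type*} [AddCommGroup M] [Module (L0 μ) M] [BanachMod μ M]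
variable {A E W : Type*} [AddCommGroup A] [Module (L0 μ) A]
  [AddCommGroup E] [Module (L0 μ) E] [BanachMod μ E]
  [AddCommGroup W] [Module (L0 μ) W] [BanachMod μ W]

lemma dM_triangle (u v w : M) : dM μ u w ≤ dM μ u v + dM μ v w :=
  (dL0_mono (pn_nonneg _) (pn_sub_le u v w)).trans (dL0_add _ _)

lemma dM_comm (u v : M) : dM μ u v = dM μ v u := by
  unfold dM; rw [pn_sub_comm]

lemma dM_add_add (u u' v v' : M) : dM μ (u + u') (v + v') ≤ dM μ u v + dM μ u' v' := by
  unfold dM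
  rw [add_sub_add_comm]
  exact (dL0_mono (pn_nonneg _) (pn_add_le _ _)).trans (dL0_add _ _)

lemma dM_smul (c : L0 μ) {ε : ℝ} (hε : 0 < ε) :
    ∃ δ : ℝ, 0 < δ ∧ ∀ (N : Type _) [AddCommGroup N] [Module (L0 μ) N] [BanachMod μ N] (u v : N),
      dM μ u v < δ → dM μ (c • u) (c • v) < ε := by
  obtain ⟨δ, hδ, h⟩ := dL0_mul |c| hε
  refine ⟨δ, hδ, fun N _ _ _ u v huv => ?_⟩
  unfold dM
  rw [← smul_sub, pn_smul]
  exact h _ huv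

lemma eq_of_dM {u v : M} (h : ∀ ε : ℝ, 0 < ε → dM μ u v < ε) : u = v :=
  sub_eq_zero.1 (pn_eq_zero.1 (eq_zero_of_dL0 h))

/-- If `e` and `j` induce the same pointwise norm, then every limit of values of `e` is matched by a
limit of the corresponding values of `j`. -/
lemma exists_limit (e : A →ₗ[L0 μ] E) (j : A →ₗ[L0 μ] W) (hiso : ∀ a, pn μ (j a) = pn μ (e a))
    (x : E) (hx : ∀ ε : ℝ, 0 < ε → ∃ a, dM μ (e a) x < ε) :
    ∃ w : W, ∀ ε : ℝ, 0 < ε → ∃ a, dM μ (e a) x < ε ∧ dM μ (j a) w < ε := by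
  have hd : ∀ a b, dM μ (j a) (j b) = dM μ (e a) (e b) := fun a b => by
    unfold dM
    rw [← map_sub, ← map_sub, hiso]
  choose a ha using fun n : ℕ => hx (1 / ((n : ℝ) + 1)) (by positivity)
  have hlim : ∀ ε : ℝ, 0 < ε → ∃ N : ℕ, ∀ n ≥ N, dM μ (e (a n)) x < ε := fun ε hε => by
    obtain ⟨N, hN⟩ := exists_nat_one_div_lt hε
    exact ⟨N, fun n hn => (ha n).trans_le ((Nat.one_div_le_one_div hn).trans hN.le)⟩
  obtain ⟨w, hw⟩ := BanachMod.complete (μ := μ) (fun n => j (a n)) (fun ε hε => by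
    obtain ⟨N, hN⟩ := hlim (ε / 2) (half_pos hε)
    refine ⟨N, fun m hm n hn => ?_⟩
    change dM μ (j (a m)) (j (a n)) < ε
    rw [hd]
    have h1 := hN m hm
    have h2 := hN n hn
    have h3 := dM_triangle (μ := μ) (e (a m)) x (e (a n))
    rw [dM_comm x] at h3
    linarith)
  refine ⟨w, fun ε hε => ?_⟩
  obtain ⟨N, hN⟩ := hlim ε hε
  have hw' : ∀ᶠ n in atTop, dM μ (j (a n)) w < ε := hw.eventually (gt_mem_nhds hε)
  obtain ⟨n, hn, hn'⟩ := (hw'.and (eventually_ge_atTop N)).exists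
  exact ⟨a n, hN n hn', hn⟩

/-- The closure in `E × W` of the graph of the correspondence `e a ↦ j a`. -/
def closedGraph (e : A →ₗ[L0 μ] E) (j : A →ₗ[L0 μ] W) : Submodule (L0 μ) (E × W) where
  carrier := {z | ∀ ε : ℝ, 0 < ε → ∃ a, dM μ (e a) z.1 < ε ∧ dM μ (j a) z.2 < ε}
  add_mem' := by
    intro z z' hz hz' ε hε
    obtain ⟨a, ha1, ha2⟩ := hz (ε / 2) (half_pos hε)
    obtain ⟨b, hb1, hb2⟩ := hz' (ε / 2) (half_pos hε)
    refine ⟨a + b, ?_, ?_⟩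
    · rw [map_add]
      have := dM_add_add (μ := μ) (e a) (e b) z.1 z'.1
      simp only [Prod.fst_add]
      linarith
    · rw [map_add]
      have := dM_add_add (μ := μ) (j a) (j b) z.2 z'.2
      simp only [Prod.snd_add]
      linarith
  zero_mem' := by
    intro ε hε
    refine ⟨0, ?_, ?_⟩ <;> simp [dM, pn_zero, dL0, hε]
  smul_mem' := by
    intro c z hz ε hε
    obtain ⟨δ, hδ, h⟩ := dM_smul c hε
    obtain ⟨δ', hδ', h'⟩ := dM_smul c hε
    obtain ⟨a, ha1, ha2⟩ := hz (min δ δ') (lt_min hδ hδ')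
    refine ⟨c • a, ?_, ?_⟩
    · rw [map_smul]
      exact h _ _ _ (ha1.trans_le (min_le_left _ _))
    · rw [map_smul]
      exact h' _ _ _ (ha2.trans_le (min_le_right _ _))

lemma pn_eq_of_mem_closedGraph {e : A →ₗ[L0 μ] E} {j : A →ₗ[L0 μ] W}
    (hiso : ∀ a, pn μ (j a) = pn μ (e a)) {z : E × W} (hz : z ∈ closedGraph e j) :
    pn μ z.1 = pn μ z.2 := by
  have h0 : |pn μ z.1 - pn μ z.2| = 0 := by
    refine eq_zero_of_dL0 fun ε hε => ?_
    obtain ⟨a, ha1, ha2⟩ := hz (ε / 2) (half_pos hε)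
    have h1 : |pn μ z.1 - pn μ z.2| ≤ pn μ (e a - z.1) + pn μ (j a - z.2) := by
      have h2 := pn_le_add (μ := μ) z.1 (e a)
      have h3 := pn_le_add (μ := μ) (e a) z.1
      have h4 := pn_le_add (μ := μ) z.2 (j a)
      have h5 := pn_le_add (μ := μ) (j a) z.2
      rw [hiso] at h4 h5
      rw [pn_sub_comm] at h2 h4
      rw [abs_le']
      constructor
      · rw [sub_le_iff_le_add]
        refine h2.trans ((add_le_add_left h5 _).trans (le_of_eq ?_))
        abel
      · rw [neg_sub, sub_le_iff_le_add]
        refine h4.trans ((add_le_add_left h3 _).trans (le_of_eq ?_))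
        abel
    have h6 := (dL0_mono (abs_nonneg _) h1).trans (dL0_add _ _)
    unfold dM at ha1 ha2
    linarith
  have h1 := (le_abs_self (pn μ z.1 - pn μ z.2)).trans h0.le
  have h2 := (neg_le_abs (pn μ z.1 - pn μ z.2)).trans h0.le
  rw [neg_sub] at h2
  exact le_antisymm (sub_nonpos.1 h1) (sub_nonpos.1 h2)

/-- Two maps with dense range inducing the same pointwise norm differ by an isometric isomorphism,
whose graph is `closedGraph e j`: both projections of that submodule are bijective. -/
lemma exists_isometric_extension (e : A →ₗ[L0 μ] E) (j : A →ₗ[L0 μ] W)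
    (hiso : ∀ a, pn μ (j a) = pn μ (e a))
    (he : ∀ x : E, ∀ ε : ℝ, 0 < ε → ∃ a, dM μ (e a) x < ε)
    (hj : ∀ w : W, ∀ ε : ℝ, 0 < ε → ∃ a, dM μ (j a) w < ε) :
    ∃ T : E →ₗ[L0 μ] W, (∀ a, T (e a) = j a) ∧ (∀ x, pn μ (T x) = pn μ x) ∧
      Function.Bijective T := by
  let G := closedGraph e j
  let p₁ : G →ₗ[L0 μ] E := (LinearMap.fst (L0 μ) E W).comp G.subtype
  let p₂ : G →ₗ[L0 μ] W := (LinearMap.snd (L0 μ) E W).comp G.subtype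
  have hp : ∀ z : G, pn μ (p₁ z) = pn μ (p₂ z) := fun z => pn_eq_of_mem_closedGraph hiso z.2
  have hzero : ∀ z : G, p₁ z = 0 ↔ p₂ z = 0 := fun z => by
    rw [← pn_eq_zero (μ := μ), hp, pn_eq_zero]
  have hz0 : ∀ z : G, p₁ z = 0 → z = 0 := fun z h =>
    Subtype.ext (Prod.ext h ((hzero z).1 h))
  have b₁ : Function.Bijective p₁ := by
    refine ⟨(injective_iff_map_eq_zero p₁).2 hz0, fun x => ?_⟩
    obtain ⟨w, hw⟩ := exists_limit e j hiso x (he x)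
    exact ⟨⟨(x, w), hw⟩, rfl⟩
  have b₂ : Function.Bijective p₂ := by
    refine ⟨(injective_iff_map_eq_zero p₂).2 fun z h => hz0 z ((hzero z).2 h), fun w => ?_⟩
    obtain ⟨x, hx⟩ := exists_limit j e (fun a => (hiso a).symm) w (hj w)
    exact ⟨⟨(x, w), fun ε hε => (hx ε hε).imp fun a h => h.symm⟩, rfl⟩
  let q := LinearEquiv.ofBijective p₁ b₁
  have hq : ∀ z : G, q.symm (p₁ z) = z := fun z => q.symm_apply_apply z
  refine ⟨p₂.comp q.symm.toLinearMap, fun a => ?_, fun x => ?_, ?_⟩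
  · have hm : (e a, j a) ∈ G := fun ε hε => ⟨a, by simp [dM, pn_zero, dL0, hε]⟩
    have := hq ⟨(e a, j a), hm⟩
    exact congrArg p₂ this
  · obtain ⟨z, rfl⟩ := b₁.2 x
    have : (p₂.comp q.symm.toLinearMap) (p₁ z) = p₂ z := congrArg p₂ (hq z)
    rw [this, hp]
  · exact b₂.comp q.symm.bijective

end Extension

/-! ### Uniformly order-continuous maps -/

section UCord

variable {μ : Measure X} {K : Type*}

/-- The embedding of the constants into `L⁰`. -/
def cst (μ : Measure X) : ℝ →+ L0 μ := AddMonoidHom.mk' (fun t => AEEqFun.const X t) fun _ _ => rfl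

lemma coeFn_cst (t : ℝ) : ∀ᵐ x ∂μ, cst μ t x = t := AEEqFun.coeFn_const X t

lemma cst_one : cst μ 1 = 1 := rfl

lemma abs_cst (t : ℝ) : |cst μ t| = cst μ |t| := by
  apply AEEqFun.ext
  filter_upwards [AEEqFun.coeFn_abs (cst μ t), coeFn_cst (μ := μ) t, coeFn_cst (μ := μ) |t|]
    with x h1 h2 h3
  rw [h1, h2, h3]

lemma cst_mono {s t : ℝ} (h : s ≤ t) : cst μ s ≤ cst μ t := by
  rw [L0.le_iff]
  filter_upwards [coeFn_cst (μ := μ) s, coeFn_cst (μ := μ) t] with x h1 h2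
  rwa [h1, h2]

lemma le_zero_of_le_cst {g : L0 μ} (h : ∀ ε : ℝ, 0 < ε → g ≤ cst μ ε) : g ≤ 0 := by
  rw [L0.le_iff]
  have h1 : ∀ᵐ x ∂μ, ∀ n : ℕ, g x ≤ 1 / ((n : ℝ) + 1) := ae_all_iff.2 fun n => by
    filter_upwards [L0.le_iff.1 (h (1 / ((n : ℝ) + 1)) (by positivity)),
      coeFn_cst (μ := μ) (1 / ((n : ℝ) + 1))] with x h1 h2
    rwa [h2] at h1
  filter_upwards [h1, AEEqFun.coeFn_zero (μ := μ) (β := ℝ)] with x h2 h3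
  rw [h3]
  exact ge_of_tendsto' (tendsto_one_div_add_atTop_nhds_zero_nat (𝕜 := ℝ)) h2

lemma isGLB_mul {S : Set (L0 μ)} (hne : S.Nonempty) {b c : L0 μ} (hb : IsGLB S b) (hc : 0 ≤ c) :
    IsGLB (Set.image (fun s => s * c) S) (b * c) := by
  have h := (isLUB_mul (Set.Nonempty.neg hne) hb.neg hc).neg
  rw [neg_mul, neg_neg] at h
  convert h using 1
  ext s
  simp only [Set.mem_image, Set.mem_neg]
  constructor
  · rintro ⟨t, ht, rfl⟩
    exact ⟨-t, by simpa using ht, by simp⟩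
  · rintro ⟨t, ht, h⟩
    exact ⟨-t, ht, by rw [neg_mul, h, neg_neg]⟩

variable [SFinite μ]
variable {M : Type*} [AddCommGroup M] [Module (L0 μ) M] [BanachMod μ M]

lemma orderBounded_smul [Nonempty K] {f : K → L0 μ} (hf : OrderBoundedF μ f) (v : M) :
    OrderBounded μ (fun p => f p • v) := by
  obtain ⟨b, hb⟩ := hf
  refine ⟨b * pn μ v, ?_⟩
  have hne : (rangeAbs μ f).Nonempty := ⟨_, ⟨Classical.arbitrary K, rfl⟩⟩
  convert isLUB_mul hne hb (pn_nonneg v) using 1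
  ext g
  simp only [rangePn, rangeAbs, pn_smul, Set.mem_image, Set.mem_ofPred_eq]
  constructor
  · rintro ⟨p, rfl⟩
    exact ⟨_, ⟨p, rfl⟩, rfl⟩
  · rintro ⟨_, ⟨p, rfl⟩, rfl⟩
    exact ⟨p, rfl⟩

variable [UniformSpace K]

lemma unifOrdCont_smul [Nonempty K] {f : K → L0 μ} (hf : UnifOrdContF μ f) (v : M) :
    UnifOrdCont μ (fun p => f p • v) := by
  obtain ⟨V, hV, hV0⟩ := hf
  refine ⟨fun U => V U * pn μ v, fun U => ?_, ?_⟩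
  · let p := Classical.arbitrary K
    have hne : (varSetF μ f U.1).Nonempty := ⟨_, ⟨(p, p), refl_mem_uniformity U.2, rfl⟩⟩
    convert isLUB_mul hne (hV U) (pn_nonneg v) using 1
    ext g
    simp only [varSet, varSetF, ← sub_smul, pn_smul, Set.mem_image, Set.mem_ofPred_eq]
    constructor
    · rintro ⟨pq, h, rfl⟩
      exact ⟨_, ⟨pq, h, rfl⟩, rfl⟩
    · rintro ⟨_, ⟨pq, h, rfl⟩, rfl⟩
      exact ⟨pq, h, rfl⟩
  · have hne : (Set.range V).Nonempty := ⟨_, ⟨⟨Set.univ, univ_mem⟩, rfl⟩⟩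
    have := isGLB_mul hne hV0 (pn_nonneg (μ := μ) v)
    rwa [← Set.range_comp, zero_mul] at this

/-- Real-valued continuous functions on a compact space, seen as maps into the constants of `L⁰`,
belong to `UC_ord`. -/
lemma memUCord_cst [CompactSpace K] [Nonempty K] (φ : C(K, ℝ)) (hφ : ∀ p, |φ p| ≤ 1) :
    OrderBoundedF μ (fun p => cst μ (φ p)) ∧ UnifOrdContF μ (fun p => cst μ (φ p)) := by
  have p₀ := Classical.arbitrary K
  constructor
  · refine exists_isLUB_of_bdd _ ⟨_, ⟨p₀, rfl⟩⟩ ⟨cst μ 1, ?_⟩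
    rintro _ ⟨p, rfl⟩
    rw [abs_cst]
    exact cst_mono (hφ p)
  · have hex : ∀ U : {U : Set (K × K) // U ∈ uniformity K},
        ∃ b, IsLUB (varSetF μ (fun p => cst μ (φ p)) U.1) b := fun U => by
      refine exists_isLUB_of_bdd _ ⟨_, ⟨(p₀, p₀), refl_mem_uniformity U.2, rfl⟩⟩ ⟨cst μ 2, ?_⟩
      rintro _ ⟨pq, -, rfl⟩
      rw [← map_sub, abs_cst]
      refine cst_mono ((abs_sub _ _).trans ?_)
      linarith [hφ pq.1, hφ pq.2]
    choose V hV using hex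
    refine ⟨V, hV, ?_, ?_⟩
    · rintro _ ⟨U, rfl⟩
      exact (abs_nonneg _).trans ((hV U).1 ⟨(p₀, p₀), refl_mem_uniformity U.2, rfl⟩)
    · intro g hg
      refine le_zero_of_le_cst fun ε hε => ?_
      have huc := CompactSpace.uniformContinuous_of_continuous φ.continuous
      have hS : {pq : K × K | dist (φ pq.1) (φ pq.2) < ε} ∈ uniformity K :=
        huc (Metric.dist_mem_uniformity hε)
      refine (hg ⟨⟨_, hS⟩, rfl⟩).trans ((hV ⟨_, hS⟩).2 ?_)
      rintro _ ⟨pq, h, rfl⟩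
      have hdist : dist (φ pq.1) (φ pq.2) < ε := h
      rw [← map_sub, abs_cst, ← Real.dist_eq]
      exact cst_mono hdist.le

/-- A uniformly order-continuous map has variation of arbitrarily small size, measured in the
distance of `L⁰`, over a suitable entourage. -/
lemma exists_entourage {w : K → M} (hw : UnifOrdCont μ w) {ε : ℝ} (hε : 0 < ε) :
    ∃ U ∈ uniformity K, ∃ V : L0 μ, (∀ p q, (p, q) ∈ U → pn μ (w p - w q) ≤ V) ∧
      dL0 μ V 0 < ε := by
  obtain ⟨V, hV, hV0⟩ := hw
  obtain ⟨g, hg, hap⟩ := exists_isGLB_of_directed (Set.range V)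
    ⟨V ⟨Set.univ, univ_mem⟩, ⟨_, rfl⟩⟩ ⟨0, hV0.1⟩ (by
      rintro _ ⟨U, rfl⟩ _ ⟨U', rfl⟩
      refine ⟨V ⟨U.1 ∩ U'.1, inter_mem U.2 U'.2⟩, ⟨_, rfl⟩, ?_, ?_⟩
      · refine (hV _).mono (hV _) ?_
        rintro _ ⟨pq, h, rfl⟩
        exact ⟨pq, h.1, rfl⟩
      · refine (hV _).mono (hV _) ?_
        rintro _ ⟨pq, h, rfl⟩
        exact ⟨pq, h.2, rfl⟩)
  obtain rfl := hg.unique hV0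
  obtain ⟨_, ⟨U, rfl⟩, hU⟩ := hap ε hε
  exact ⟨U.1, U.2, V U, fun p q h => (hV U).1 ⟨(p, q), h, rfl⟩, hU⟩

/-- Approximation of a map by `∑ i, φ i • w (x i)`, with `φ` a partition of unity subordinate to a
finite cover by `𝒰`-small neighbourhoods of the points `x i`. -/
lemma exists_partition_approx [CompactSpace K] [T2Space K] (w : K → M) {U : Set (K × K)}
    (hU : U ∈ uniformity K) {V : L0 μ} (hV : ∀ p q, (p, q) ∈ U → pn μ (w p - w q) ≤ V) :
    ∃ (t : Finset K) (φ : t → C(K, ℝ)), (∀ i p, |φ i p| ≤ 1) ∧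
      ∀ p, pn μ (∑ i, cst μ (φ i p) • w i - w p) ≤ V := by
  have hB : ∀ i : K, interior {q | (q, i) ∈ U} ∈ nhds i := fun i =>
    interior_mem_nhds.2 (mem_nhds_right i hU)
  obtain ⟨t, -, ht⟩ := isCompact_univ.elim_nhds_subcover _ fun i _ => hB i
  obtain ⟨φ, hφ⟩ := PartitionOfUnity.exists_isSubordinate (s := Set.univ) isClosed_univ
    (fun i : t => interior {q | (q, (i : K)) ∈ U}) (fun i => isOpen_interior) (by
      intro p hp
      obtain ⟨i, hi, h⟩ := Set.mem_iUnion₂.1 (ht hp)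
      exact Set.mem_iUnion.2 ⟨⟨i, hi⟩, h⟩)
  refine ⟨t, fun i => φ i, fun i p => ?_, fun p => ?_⟩
  · rw [abs_of_nonneg (φ.nonneg i p)]
    exact φ.le_one i p
  · have hsum : ∑ i, cst μ (φ i p) = 1 := by
      rw [← map_sum, ← finsum_eq_sum_of_fintype, φ.sum_eq_one (Set.mem_univ p), cst_one]
    have h1 : ∑ i, cst μ (φ i p) • w i - w p = ∑ i, cst μ (φ i p) • (w i - w p) := by
      simp only [smul_sub, Finset.sum_sub_distrib, ← Finset.sum_smul, hsum, one_smul]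
    rw [h1]
    calc pn μ (∑ i, cst μ (φ i p) • (w i - w p))
        ≤ ∑ i, pn μ (cst μ (φ i p) • (w i - w p)) := pn_sum_le _ _
      _ ≤ ∑ i, cst μ (φ i p) * V := by
          refine Finset.sum_le_sum fun i _ => ?_
          rw [pn_smul, abs_cst, abs_of_nonneg (φ.nonneg i p)]
          by_cases h : φ i p = 0
          · simp [h]
          · refine mul_le_mul_of_nonneg_left ?_ ?_
            · have hp : p ∈ interior {q | (q, (i : K)) ∈ U} :=
                hφ i (subset_tsupport _ h)
              rw [pn_sub_comm]
              have hp' : p ∈ {q | (q, (i : K)) ∈ U} := interior_subset hp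
              exact hV _ _ hp'
            · rw [← map_zero (cst μ)]
              exact cst_mono (φ.nonneg i p)
      _ = V := by rw [← Finset.sum_mul, hsum, one_mul]

end UCord

/-! ### The operator on the algebraic tensor product -/

lemma exists_rep {μ : Measure X} {M : Type*} [AddCommGroup M] [Module (L0 μ) M]
    {U : Type*} [AddCommGroup U] [Module (L0 μ) U] (α : U ⊗[L0 μ] M) :
    ∃ (n : ℕ) (u : Fin n → U) (v : Fin n → M), α = ∑ i, u i ⊗ₜ[L0 μ] v i := by
  obtain ⟨S, hS⟩ := TensorProduct.exists_finset α
  refine ⟨S.card, fun i => (S.equivFin.symm i).1.1, fun i => (S.equivFin.symm i).1.2, ?_⟩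
  rw [Equiv.sum_comp S.equivFin.symm (fun z : S => z.1.1 ⊗ₜ[L0 μ] z.1.2),
    Finset.sum_coe_sort S (fun z : U × M => z.1 ⊗ₜ[L0 μ] z.2)]
  exact hS

section Main

variable {μ : Measure X} [SFinite μ] {K : Type*} [UniformSpace K]
variable {M : Type*} [AddCommGroup M] [Module (L0 μ) M] [BanachMod μ M]
  {U : Type*} [AddCommGroup U] [Module (L0 μ) U] [BanachMod μ U]
  {W : Type*} [AddCommGroup W] [Module (L0 μ) W] [BanachMod μ W]
  {evU : U →ₗ[L0 μ] (K → L0 μ)} {evW : W →ₗ[L0 μ] (K → M)}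

lemma exists_tensor_map [Nonempty K] (hU : IsUCordL0 μ K U evU) (hW : IsUCordMod μ K M W evW) :
    ∃ j : U ⊗[L0 μ] M →ₗ[L0 μ] W, ∀ u v p, evW (j (u ⊗ₜ[L0 μ] v)) p = evU u p • v := by
  choose b hb using fun (u : U) (v : M) => hW.surj (fun p => evU u p • v)
    (orderBounded_smul (hU.mem u).1 v) (unifOrdCont_smul (hU.mem u).2 v)
  refine ⟨TensorProduct.lift (LinearMap.mk₂ (L0 μ) b ?_ ?_ ?_ ?_), fun u v p => ?_⟩
  · intro u u' v
    apply hW.inj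
    rw [map_add, hb, hb, hb]
    ext p
    simp [add_smul]
  · intro c u v
    apply hW.inj
    rw [map_smul, hb, hb]
    ext p
    simp [mul_smul]
  · intro u v v'
    apply hW.inj
    rw [map_add, hb, hb, hb]
    ext p
    simp
  · intro c u v
    apply hW.inj
    rw [map_smul, hb, hb]
    ext p
    simp [smul_comm c]
  · rw [TensorProduct.lift.tmul, LinearMap.mk₂_apply, hb]

/-- The operator is isometric for the injective norm.  Testing with an evaluation at `p` and with a
functional norming `∑ f_i(p) v_i` gives one inequality; for the other, a pair `(ω, η)` satisfies
`∑ ω(f_i) η(v_i) = ω(∑ η(v_i) f_i)`. -/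
lemma isLUB_epsReps (hU : IsUCordL0 μ K U evU) (hW : IsUCordMod μ K M W evW)
    (j : U ⊗[L0 μ] M →ₗ[L0 μ] W) (hj : ∀ u v p, evW (j (u ⊗ₜ[L0 μ] v)) p = evU u p • v)
    (α : U ⊗[L0 μ] M) : IsLUB (epsReps μ α) (pn μ (j α)) := by
  have hev : ∀ (n : ℕ) (u : Fin n → U) (v : Fin n → M) (p : K),
      evW (j (∑ i, u i ⊗ₜ[L0 μ] v i)) p = ∑ i, evU (u i) p • v i := fun n u v p => by
    simp only [map_sum, Finset.sum_apply, hj]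
  refine ⟨?_, fun d hd => (hW.norm (j α)).2 ?_⟩
  · rintro _ ⟨n, u, v, ω, η, hω, hη, rfl, rfl⟩
    have h1 : ∑ i, ω (u i) * η (v i) = ω (∑ i, η (v i) • u i) := by
      simp only [map_sum, map_smul, smul_eq_mul]
      exact Finset.sum_congr rfl fun i _ => mul_comm _ _
    rw [h1]
    refine (hω _).trans ((hU.norm _).2 ?_)
    rintro _ ⟨p, rfl⟩
    have h2 : evU (∑ i, η (v i) • u i) p = η (evW (j (∑ i, u i ⊗ₜ[L0 μ] v i)) p) := by
      rw [hev]
      simp only [map_sum, map_smul, smul_eq_mul, Finset.sum_apply, Pi.smul_apply]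
      exact Finset.sum_congr rfl fun i _ => mul_comm _ _
    rw [h2]
    exact (hη _).trans ((hW.norm _).1 ⟨p, rfl⟩)
  · rintro _ ⟨p, rfl⟩
    obtain ⟨n, u, v, rfl⟩ := exists_rep α
    obtain ⟨η, hη, hηv⟩ := exists_dual_eq_pn (μ := μ) (evW (j (∑ i, u i ⊗ₜ[L0 μ] v i)) p)
    rw [← hηv]
    refine (le_abs_self _).trans
      (hd ⟨n, u, v, (LinearMap.proj p).comp evU, η, fun u' => ?_, hη, rfl, ?_⟩)
    · exact (hU.norm u').1 ⟨p, rfl⟩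
    · rw [hev]
      simp only [map_sum, map_smul, smul_eq_mul, LinearMap.comp_apply, LinearMap.proj_apply]

/-- The operator has dense range: `w` is approximated by `∑ φ_i ⊗ w(x_i)`. -/
lemma tensor_map_dense [CompactSpace K] [T2Space K] [Nonempty K]
    (hU : IsUCordL0 μ K U evU) (hW : IsUCordMod μ K M W evW)
    (j : U ⊗[L0 μ] M →ₗ[L0 μ] W) (hj : ∀ u v p, evW (j (u ⊗ₜ[L0 μ] v)) p = evU u p • v)
    (w : W) {ε : ℝ} (hε : 0 < ε) : ∃ α, dM μ (j α) w < ε := by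
  obtain ⟨S, hS, V, hV, hVε⟩ := exists_entourage (hW.mem w).2 hε
  obtain ⟨t, φ, hφ, happ⟩ := exists_partition_approx (evW w) hS hV
  choose u hu using fun i => hU.surj _ (memUCord_cst (μ := μ) (φ i) (hφ i)).1
    (memUCord_cst (μ := μ) (φ i) (hφ i)).2
  refine ⟨∑ i, u i ⊗ₜ[L0 μ] evW w i, lt_of_le_of_lt (dL0_mono (pn_nonneg _) ?_) hVε⟩
  refine (hW.norm _).2 ?_
  rintro _ ⟨p, rfl⟩
  have : evW (j (∑ i, u i ⊗ₜ[L0 μ] evW w i) - w) p =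
      ∑ i, cst μ (φ i p) • evW w i - evW w p := by
    simp only [map_sub, Pi.sub_apply, map_sum, Finset.sum_apply, hj, hu]
  rw [this]
  exact happ p

end Main

/-- Let `(K,Φ)` be a compact Hausdorff uniform space, `𝕏` a σ-finite
measure space and `ℳ` a Banach `L⁰(𝕏)`-module. The unique linear continuous operator
`𝔧 : UC_ord(K;L⁰(𝕏)) ⊗̂_ε ℳ → UC_ord(K;ℳ)` with `𝔧(f ⊗ v)(p) = f(p) • v` is an isomorphism
of Banach `L⁰(𝕏)`-modules. Here `U` realizes `UC_ord(K;L⁰(𝕏))`, `W` realizes `UC_ord(K;ℳ)`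
and `E` realizes the injective tensor product `U ⊗̂_ε ℳ`. -/
theorem injective_tensor_with_UCord
    (μ : Measure X) [SigmaFinite μ]
    (K : Type*) [UniformSpace K] [CompactSpace K] [T2Space K]
    (M : Type*) [AddCommGroup M] [Module (L0 μ) M] [BanachMod μ M]
    (U : Type*) [AddCommGroup U] [Module (L0 μ) U] [BanachMod μ U]
    (W : Type*) [AddCommGroup W] [Module (L0 μ) W] [BanachMod μ W]
    (E : Type*) [AddCommGroup E] [Module (L0 μ) E] [BanachMod μ E]
    (evU : U →ₗ[L0 μ] (K → L0 μ)) (hU : IsUCordL0 μ K U evU)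
    (evW : W →ₗ[L0 μ] (K → M)) (hW : IsUCordMod μ K M W evW)
    (e : U ⊗[L0 μ] M →ₗ[L0 μ] E) (hE : IsEpsTensor μ U M E e) :
    ∃ j : E →ₗ[L0 μ] W,
      ((∀ (u : U) (v : M) (p : K), evW (j (e (u ⊗ₜ[L0 μ] v))) p = evU u p • v)
        ∧ (∀ x : E, pn μ (j x) = pn μ x)
        ∧ Function.Bijective j)
      ∧ (∀ j' : E →ₗ[L0 μ] W, IsHom μ j' →
          (∀ (u : U) (v : M) (p : K), evW (j' (e (u ⊗ₜ[L0 μ] v))) p = evU u p • v) →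
          j' = j) := by
  rcases isEmpty_or_nonempty K with hK | hK
  · -- On an empty `K` the supremum of the empty set exists in `L⁰` only if `L⁰` is trivial.
    obtain ⟨⟨b, hb⟩, -⟩ := hU.mem 0
    have hle : ∀ f : L0 μ, b ≤ f := fun f => hb.2 (by rintro _ ⟨p, -⟩; exact hK.elim p)
    have h10 : (1 : L0 μ) = 0 := by
      have h1 : (1 : L0 μ) ≤ 0 := by
        have := hle (b - 1)
        rw [le_sub_self_iff] at this
        exact this
      exact le_antisymm h1 zero_le_one
    have hEs : ∀ x : E, x = 0 := fun x => by rw [← one_smul (L0 μ) x, h10, zero_smul]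
    have hWs : ∀ x : W, x = 0 := fun x => by rw [← one_smul (L0 μ) x, h10, zero_smul]
    refine ⟨0, ⟨fun u v p => hK.elim p, fun x => ?_, fun x y _ => ?_, fun w => ?_⟩,
      fun j' _ _ => ?_⟩
    · rw [hEs x, map_zero, pn_zero, pn_zero]
    · rw [hEs x, hEs y]
    · exact ⟨0, by rw [hWs w, map_zero]⟩
    · ext x
      rw [hWs (j' x), hWs ((0 : E →ₗ[L0 μ] W) x)]
  · obtain ⟨j₀, hj₀⟩ := exists_tensor_map hU hW
    obtain ⟨j, hj, hiso, hbij⟩ := exists_isometric_extension e j₀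
      (fun α => (isLUB_epsReps hU hW j₀ hj₀ α).unique (hE.pn_emb α)) hE.dense
      (fun w ε hε => tensor_map_dense hU hW j₀ hj₀ w hε)
    refine ⟨j, ⟨fun u v p => by rw [hj, hj₀], hiso, hbij⟩, fun j' hj' hj'e => ?_⟩
    obtain ⟨g, hg0, hg⟩ := hj'
    have hag : ∀ α, j' (e α) = j (e α) := fun α => by
      have : j'.comp e = j.comp e := TensorProduct.ext' fun u v => hW.inj (by
        ext p
        rw [LinearMap.comp_apply, LinearMap.comp_apply, hj'e, hj, hj₀])
      exact LinearMap.congr_fun this α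
    ext x
    refine eq_of_dM (μ := μ) fun ε hε => ?_
    obtain ⟨δ, hδ, hmul⟩ := dL0_mul (g + 1) hε
    obtain ⟨α, hα⟩ := hE.dense x δ hδ
    refine lt_of_le_of_lt (dL0_mono (pn_nonneg _) ?_) (hmul _ hα)
    have h1 : j' x - j x = j (e α - x) - j' (e α - x) := by
      rw [map_sub, map_sub, hag]; abel
    rw [h1, sub_eq_add_neg, add_mul, one_mul, add_comm]
    refine (pn_add_le _ _).trans (add_le_add ?_ ?_)
    · rw [pn_neg]; exact hg _
    · exact (hiso _).le

end Paper
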